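/- arXiv:2412.07054 — 2 statements merged into one kernel-verified Lean document; each statement's English description precedes it below -/
import Mathlib

section
/- Define the complex numbers L₁ = F(1/8,3/4) + 2i√2·F(3/8,5/4) + 4·F(5/8,3/4) − 8i√2·F(7/8,5/4) (the L-value L(f_{1/8,3/4},1) of the Hecke eigenform built from the Galois family of 𝕂₂(1/8,3/4), up to normalization) and L₂ = F(1/8,7/8) + 2√2·F(3/8,5/8) + 4i·F(5/8,11/8) + 8i√2·F(7/8,9/8) (similarly for f_{1/8,7/8}). Then L₁² = (2 − √2 − 4i·(√2 − 1))·L₂² (note √(3 − 2√2) = √2 − 1, so the constant is 2 − √2 − 4i√(3−2√2)). -/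
/-- The Pochhammer symbol (x)_k = x(x+1)⋯(x+k−1). -/
noncomputable def poch (x : ℝ) (k : ℕ) : ℝ := ∏ i ∈ Finset.range k, (x + i)

/-- The hypergeometric series ₃F₂(a1,a2,a3;b1,b2;1). -/
noncomputable def threeF2 (a1 a2 a3 b1 b2 : ℝ) : ℝ :=
  ∑' k : ℕ, poch a1 k * poch a2 k * poch a3 k /
    (poch b1 k * poch b2 k * (Nat.factorial k : ℝ))

/-- The Beta function B(a,b) = Γ(a)Γ(b)/Γ(a+b). -/
noncomputable def betaFn (a b : ℝ) : ℝ :=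
  Real.Gamma a * Real.Gamma b / Real.Gamma (a + b)

/-- The normalized hypergeometric value
F(r,s) = (2^{1−4r}·B(r,s−r)/N(r)) · ₃F₂(1/2,1/2,r;1,s;1), where N(r) = 2·den(r). -/
noncomputable def Fval (r s : ℚ) : ℝ :=
  (2:ℝ) ^ ((1:ℝ) - 4 * (r:ℝ)) * betaFn (r:ℝ) ((s:ℝ) - (r:ℝ)) / (2 * (r.den : ℝ)) *
    threeF2 (1/2) (1/2) (r:ℝ) 1 (s:ℝ)

/-!
The values `F(r, s)` are, up to algebraic factors, the integrals
`M(a, b) = ∫₀¹ y ^ (a - 1) (1 - y) ^ (b - 1) ₂F₁(1/2, 1/2; 1; y) dy` at `(a, b) = (r, s - r)`, and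
two families of relations hold between them.

* Writing `M` as an Euler double integral of `(1 - x y) ^ (-1/2)` and substituting a Möbius map in
  one variable gives Thomae's transformation of `₃F₂(1)`, which links `M(a, b)` with
  `M(1 - a, a + b - 1/2)` by Gamma factors.
* If `α + β + γ = 1`, then `sin(πβ) M(α, β) = M(β, γ + 1/2) + sin(πγ) M(α, γ + 1/2)`. Integrating
  the partial fractions of `1 / ((1 - t w) (t + s - t s))` over `t` and `s` yields a relation for
  each `w ∈ (0, 1)`. It is then integrated over `w = u v`, where `u` and `v` independently carry the
  arcsine weight `(v (1 - v)) ^ (-1/2)`, since `∫ (1 - t u v)⁻¹` over `v` is `π (1 - t u) ^ (-1/2)`.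

At parameters in `1/8 ℤ` these express all eight values through `M(1/8, 3/4)` and `M(5/8, 3/4)`, and
the two L-values turn out to be proportional: `L₁ = 2 sin(π/8) (√2 - i) L₂`.
-/

section EulerIntegrals

open MeasureTheory Set Real
open scoped ENNReal

lemma poch_pos {x : ℝ} (hx : 0 < x) (n : ℕ) : 0 < poch x n :=
  Finset.prod_pos fun i _ => by positivity

lemma poch_eq_ascPochhammer_smeval (x : ℝ) (n : ℕ) :
    poch x n = (ascPochhammer ℕ n).smeval x := by
  rw [Polynomial.ascPochhammer_smeval_eq_eval]
  induction n with
  | zero => simp [poch]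
  | succ n ih => rw [poch, Finset.prod_range_succ, ← poch, ih, ascPochhammer_succ_eval]

lemma Gamma_add_nat_eq_poch_mul {x : ℝ} (hx : 0 < x) (n : ℕ) :
    Gamma (x + n) = poch x n * Gamma x := by
  induction n with
  | zero => simp [poch]
  | succ n ih =>
    rw [poch, Finset.prod_range_succ, ← poch, Nat.cast_succ, ← add_assoc,
      Gamma_add_one (by positivity), ih]
    ring

lemma betaFn_pos {a b : ℝ} (ha : 0 < a) (hb : 0 < b) : 0 < betaFn a b :=
  ProbabilityTheory.beta_pos ha hb

lemma betaFn_comm (a b : ℝ) : betaFn a b = betaFn b a := by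
  rw [betaFn, betaFn, mul_comm, add_comm]

lemma betaFn_one_sub (x : ℝ) : betaFn x (1 - x) = π / sin (π * x) := by
  rw [betaFn, add_sub_cancel, Gamma_one, div_one, Gamma_mul_Gamma_one_sub]

lemma betaFn_half_half : betaFn (1 / 2) (1 / 2) = π := by
  rw [betaFn, add_halves, Gamma_one, Gamma_one_half_eq, div_one, mul_self_sqrt pi_pos.le]

lemma betaFn_add_nat {a b : ℝ} (ha : 0 < a) (hb : 0 < b) (n : ℕ) :
    betaFn (a + n) b = betaFn a b * (poch a n / poch (a + b) n) := by
  have hpoch := (poch_pos (add_pos ha hb) n).ne'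
  have hGamma := (Gamma_pos_of_pos (add_pos ha hb)).ne'
  rw [betaFn, betaFn, add_right_comm, Gamma_add_nat_eq_poch_mul ha,
    Gamma_add_nat_eq_poch_mul (add_pos ha hb)]
  field_simp

lemma hasSum_poch_div_factorial_mul_pow (a : ℝ) {z : ℝ} (hz : |z| < 1) :
    HasSum (fun n : ℕ => poch a n / n.factorial * z ^ n) ((1 - z) ^ (-a)) := by
  have h := (one_div_one_sub_rpow_hasFPowerSeriesOnBall_zero a).hasSum (y := z)
    (by simpa [enorm_eq_nnnorm, ← NNReal.coe_lt_one] using hz)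
  simp only [FormalMultilinearSeries.ofScalars_apply_eq, smul_eq_mul, zero_add] at h
  rw [rpow_neg (by linarith [le_abs_self z]), ← one_div]
  refine h.congr_fun fun n => ?_
  rw [← Ring.multichoose_eq, poch_eq_ascPochhammer_smeval,
    ← Ring.factorial_nsmul_multichoose_eq_ascPochhammer, nsmul_eq_mul,
    mul_div_cancel_left₀ _ (by positivity)]

lemma one_sub_mul_pos {x y : ℝ} (hx : x ∈ Ioo (0 : ℝ) 1) (hy : y ∈ Ioo (0 : ℝ) 1) :
    0 < 1 - x * y :=
  sub_pos.2 (mul_lt_one_of_nonneg_of_lt_one_left hx.1.le hx.2 hy.2.le)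

lemma mul_mem_Ioo_zero_one {x y : ℝ} (hx : x ∈ Ioo (0 : ℝ) 1) (hy : y ∈ Ioo (0 : ℝ) 1) :
    x * y ∈ Ioo (0 : ℝ) 1 :=
  ⟨mul_pos hx.1 hy.1, sub_pos.1 (one_sub_mul_pos hx hy)⟩

/-! ### Möbius substitutions in Beta integrals -/

/-- The Möbius map `x ↦ C x / (A (1 - x) + C x)`. For `0 < A` and `0 < C` these are the increasing
Möbius automorphisms of `(0, 1)`; the pair `(A, C)` matters only up to scaling. -/
noncomputable def mobius (A C x : ℝ) : ℝ := C * x / (A * (1 - x) + C * x)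

section Mobius

variable {A C x : ℝ}

lemma mobius_denom_pos (hA : 0 < A) (hC : 0 < C) (hx : x ∈ Ioo (0 : ℝ) 1) :
    0 < A * (1 - x) + C * x :=
  add_pos (mul_pos hA (sub_pos.2 hx.2)) (mul_pos hC hx.1)

lemma one_sub_mobius (hA : 0 < A) (hC : 0 < C) (hx : x ∈ Ioo (0 : ℝ) 1) :
    1 - mobius A C x = A * (1 - x) / (A * (1 - x) + C * x) := by
  rw [mobius, one_sub_div (mobius_denom_pos hA hC hx).ne', add_sub_cancel_right]

lemma mobius_mem_Ioo (hA : 0 < A) (hC : 0 < C) (hx : x ∈ Ioo (0 : ℝ) 1) :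
    mobius A C x ∈ Ioo (0 : ℝ) 1 := by
  have hd := mobius_denom_pos hA hC hx
  refine ⟨div_pos (mul_pos hC hx.1) hd, sub_pos.1 ?_⟩
  rw [one_sub_mobius hA hC hx]
  exact div_pos (mul_pos hA (sub_pos.2 hx.2)) hd

lemma mobius_mobius (hA : 0 < A) (hC : 0 < C) (hx : x ∈ Ioo (0 : ℝ) 1) :
    mobius C A (mobius A C x) = x := by
  have hd := (mobius_denom_pos hA hC hx).ne'
  rw [mobius, one_sub_mobius hA hC hx, mobius]
  field_simp
  ring

lemma image_mobius_Ioo (hA : 0 < A) (hC : 0 < C) : mobius A C '' Ioo 0 1 = Ioo 0 1 :=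
  Subset.antisymm (image_subset_iff.2 fun _ hx => mobius_mem_Ioo hA hC hx)
    fun y hy => ⟨mobius C A y, mobius_mem_Ioo hC hA hy, mobius_mobius hC hA hy⟩

lemma injOn_mobius_Ioo (hA : 0 < A) (hC : 0 < C) : InjOn (mobius A C) (Ioo 0 1) :=
  LeftInvOn.injOn (f₁' := mobius C A) fun _ hx => mobius_mobius hA hC hx

lemma hasDerivAt_mobius (hA : 0 < A) (hC : 0 < C) (hx : x ∈ Ioo (0 : ℝ) 1) :
    HasDerivAt (mobius A C) (A * C / (A * (1 - x) + C * x) ^ 2) x := by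
  have hnum : HasDerivAt (fun x => C * x) (C * 1) x := (hasDerivAt_id x).const_mul C
  have hdenom : HasDerivAt (fun x => A * (1 - x) + C * x) (A * -1 + C * 1) x :=
    (((hasDerivAt_id x).const_sub 1).const_mul A).add hnum
  exact (hnum.div hdenom (mobius_denom_pos hA hC hx).ne').congr_deriv (by ring)

end Mobius

/-- The measure on `(0, 1)` whose density is the Jacobi weight `x ^ (b - 1) * (1 - x) ^ (c - 1)`;
its total mass is `betaFn b c`. -/
noncomputable def jacobiMeasure (b c : ℝ) : Measure ℝ :=
  (volume.restrict (Ioo 0 1)).withDensity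
    fun x => ENNReal.ofReal (x ^ (b - 1) * (1 - x) ^ (c - 1))

instance (b c : ℝ) : SFinite (jacobiMeasure b c) := by
  unfold jacobiMeasure; infer_instance

lemma lintegral_jacobiMeasure (b c : ℝ) (f : ℝ → ℝ≥0∞) :
    ∫⁻ x, f x ∂jacobiMeasure b c =
      ∫⁻ x in Ioo 0 1, ENNReal.ofReal (x ^ (b - 1) * (1 - x) ^ (c - 1)) * f x := by
  rw [jacobiMeasure, lintegral_withDensity_eq_lintegral_mul_non_measurable _ (by fun_prop)
    (by simp)]
  rfl

lemma lintegral_jacobiMeasure_mono (b c : ℝ) {f g : ℝ → ℝ≥0∞}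
    (h : ∀ x ∈ Ioo (0 : ℝ) 1, f x ≤ g x) :
    ∫⁻ x, f x ∂jacobiMeasure b c ≤ ∫⁻ x, g x ∂jacobiMeasure b c := by
  rw [lintegral_jacobiMeasure, lintegral_jacobiMeasure]
  exact setLIntegral_mono' measurableSet_Ioo fun x hx => mul_le_mul_right (h x hx) _

lemma lintegral_jacobiMeasure_congr (b c : ℝ) {f g : ℝ → ℝ≥0∞}
    (h : ∀ x ∈ Ioo (0 : ℝ) 1, f x = g x) :
    ∫⁻ x, f x ∂jacobiMeasure b c = ∫⁻ x, g x ∂jacobiMeasure b c :=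
  le_antisymm (lintegral_jacobiMeasure_mono b c fun x hx => (h x hx).le)
    (lintegral_jacobiMeasure_mono b c fun x hx => (h x hx).ge)

lemma lintegral_jacobiMeasure_rpow_mul_rpow_mul (b c d e : ℝ) (f : ℝ → ℝ≥0∞) :
    ∫⁻ x, ENNReal.ofReal (x ^ d * (1 - x) ^ e) * f x ∂jacobiMeasure b c =
      ∫⁻ x, f x ∂jacobiMeasure (b + d) (c + e) := by
  rw [lintegral_jacobiMeasure, lintegral_jacobiMeasure]
  refine setLIntegral_congr_fun measurableSet_Ioo fun x ⟨hx0, hx1⟩ => ?_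
  have hx1' : 0 < 1 - x := sub_pos.2 hx1
  rw [← mul_assoc, ← ENNReal.ofReal_mul (by positivity), mul_mul_mul_comm, ← rpow_add hx0,
    ← rpow_add hx1', sub_add_eq_add_sub, sub_add_eq_add_sub]

lemma lintegral_jacobiMeasure_rpow_mul (b c d : ℝ) (f : ℝ → ℝ≥0∞) :
    ∫⁻ x, ENNReal.ofReal (x ^ d) * f x ∂jacobiMeasure b c =
      ∫⁻ x, f x ∂jacobiMeasure (b + d) c := by
  simpa using lintegral_jacobiMeasure_rpow_mul_rpow_mul b c d 0 f

lemma lintegral_jacobiMeasure_one_sub_rpow_mul (b c e : ℝ) (f : ℝ → ℝ≥0∞) :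
    ∫⁻ x, ENNReal.ofReal ((1 - x) ^ e) * f x ∂jacobiMeasure b c =
      ∫⁻ x, f x ∂jacobiMeasure b (c + e) := by
  simpa using lintegral_jacobiMeasure_rpow_mul_rpow_mul b c 0 e f

lemma lintegral_jacobiMeasure_one {b c : ℝ} (hb : 0 < b) (hc : 0 < c) :
    ∫⁻ _, 1 ∂jacobiMeasure b c = ENNReal.ofReal (betaFn b c) := by
  have hB : 0 < betaFn b c := betaFn_pos hb hc
  have hbetaPDF := ProbabilityTheory.lintegral_betaPDF_eq_one hb hc
  rw [ProbabilityTheory.lintegral_betaPDF] at hbetaPDF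
  simp_rw [lintegral_jacobiMeasure, mul_one]
  rw [← mul_one (ENNReal.ofReal (betaFn b c)), ← hbetaPDF,
    ← lintegral_const_mul' _ _ ENNReal.ofReal_ne_top]
  refine lintegral_congr fun x => ?_
  rw [← ENNReal.ofReal_mul hB.le]
  change _ = ENNReal.ofReal (betaFn b c * (1 / betaFn b c * _ * _))
  field_simp

lemma lintegral_jacobiMeasure_pow {b c : ℝ} (hb : 0 < b) (hc : 0 < c) (n : ℕ) :
    ∫⁻ x, ENNReal.ofReal (x ^ n) ∂jacobiMeasure b c = ENNReal.ofReal (betaFn (b + n) c) := by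
  rw [← lintegral_jacobiMeasure_one (by positivity) hc, ← lintegral_jacobiMeasure_rpow_mul]
  simp only [rpow_natCast, mul_one]

lemma lintegral_jacobiMeasure_comp_one_sub (b c : ℝ) (f : ℝ → ℝ≥0∞) :
    ∫⁻ x, f (1 - x) ∂jacobiMeasure b c = ∫⁻ x, f x ∂jacobiMeasure c b := by
  have hderiv (x : ℝ) : HasDerivAt (fun x : ℝ => 1 - x) (-1) x := (hasDerivAt_id x).const_sub 1
  have himage : (fun x : ℝ => 1 - x) '' Ioo 0 1 = Ioo 0 1 := by simp
  rw [lintegral_jacobiMeasure c b, ← himage,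
    lintegral_image_eq_lintegral_abs_deriv_mul measurableSet_Ioo
      (fun x _ => (hderiv x).hasDerivWithinAt) sub_right_injective.injOn, lintegral_jacobiMeasure]
  refine lintegral_congr fun x => ?_
  simp [mul_comm]

lemma lintegral_jacobiMeasure_comp_mobius {A C : ℝ} (hA : 0 < A) (hC : 0 < C) (b c : ℝ)
    (f : ℝ → ℝ≥0∞) :
    ∫⁻ x, f x ∂jacobiMeasure b c = ENNReal.ofReal (A ^ c * C ^ b) *
      ∫⁻ x, ENNReal.ofReal ((A * (1 - x) + C * x) ^ (-(b + c))) * f (mobius A C x)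
        ∂jacobiMeasure b c := by
  rw [lintegral_jacobiMeasure, ← image_mobius_Ioo hA hC,
    lintegral_image_eq_lintegral_abs_deriv_mul measurableSet_Ioo
      (fun x hx => (hasDerivAt_mobius hA hC hx).hasDerivWithinAt) (injOn_mobius_Ioo hA hC),
    lintegral_jacobiMeasure, ← lintegral_const_mul' _ _ ENNReal.ofReal_ne_top]
  refine setLIntegral_congr_fun measurableSet_Ioo fun x hx => ?_
  have hx0 : 0 < x := hx.1
  have hx1 : 0 < 1 - x := sub_pos.2 hx.2
  have hd := mobius_denom_pos hA hC hx
  simp only [one_sub_mobius hA hC hx]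
  have : 0 < mobius A C x := (mobius_mem_Ioo hA hC hx).1
  rw [abs_of_pos (by positivity), ← mul_assoc, ← mul_assoc, ← mul_assoc,
    ← ENNReal.ofReal_mul (by positivity), ← ENNReal.ofReal_mul (by positivity),
    ← ENNReal.ofReal_mul (by positivity)]
  congr 2
  rw [mobius]
  generalize A * (1 - x) + C * x = d at hd ⊢
  rw [div_rpow (by positivity) hd.le, div_rpow (by positivity) hd.le, mul_rpow hC.le hx0.le,
    mul_rpow hA.le hx1.le, rpow_neg hd.le, rpow_add hd, rpow_sub_one hC.ne', rpow_sub_one hA.ne',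
    rpow_sub_one hd.ne', rpow_sub_one hd.ne']
  field_simp

lemma lintegral_jacobiMeasure_feynman {A C b c : ℝ} (hA : 0 < A) (hC : 0 < C) (hb : 0 < b)
    (hc : 0 < c) :
    ∫⁻ x, ENNReal.ofReal ((A * (1 - x) + C * x) ^ (-(b + c))) ∂jacobiMeasure b c =
      ENNReal.ofReal (betaFn b c * (A ^ (-c) * C ^ (-b))) := by
  have h := lintegral_jacobiMeasure_comp_mobius hA hC b c 1
  simp only [Pi.one_apply, mul_one, lintegral_jacobiMeasure_one hb hc] at h
  rw [mul_comm, ENNReal.ofReal_mul (by positivity), h, ← mul_assoc,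
    ← ENNReal.ofReal_mul (by positivity), mul_mul_mul_comm, ← rpow_add hA, ← rpow_add hC]
  simp

lemma lintegral_jacobiMeasure_inv {A C b c : ℝ} (hA : 0 < A) (hC : 0 < C) (hb : 0 < b)
    (hc : 0 < c) (hbc : b + c = 1) :
    ∫⁻ x, ENNReal.ofReal ((A * (1 - x) + C * x)⁻¹) ∂jacobiMeasure b c =
      ENNReal.ofReal (betaFn b c * (A ^ (-c) * C ^ (-b))) := by
  simpa only [hbc, rpow_neg_one] using lintegral_jacobiMeasure_feynman hA hC hb hc

/-- Euler's transformation of `₂F₁`. -/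
lemma lintegral_jacobiMeasure_one_sub_mul_rpow (a b c : ℝ) {w : ℝ} (hw : w ∈ Ioo (0 : ℝ) 1) :
    ∫⁻ x, ENNReal.ofReal ((1 - x * w) ^ (-a)) ∂jacobiMeasure b c =
      ENNReal.ofReal ((1 - w) ^ (c - a)) *
        ∫⁻ x, ENNReal.ofReal ((1 - x * w) ^ (-(b + c - a))) ∂jacobiMeasure c b := by
  have hw1 : 0 < 1 - w := sub_pos.2 hw.2
  rw [← lintegral_jacobiMeasure_comp_one_sub c b,
    lintegral_jacobiMeasure_comp_mobius one_pos hw1 c b, one_rpow, one_mul, sub_eq_add_neg c a,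
    rpow_add hw1, ENNReal.ofReal_mul (by positivity), mul_assoc]
  congr 1
  rw [← lintegral_const_mul' _ _ ENNReal.ofReal_ne_top]
  refine lintegral_jacobiMeasure_congr c b fun x hx => ?_
  have hd := one_sub_mul_pos hx hw
  have hdenom : 1 * (1 - x) + (1 - w) * x = 1 - x * w := by ring
  have hcomp : 1 - (1 - mobius 1 (1 - w) x) * w = (1 - w) / (1 - x * w) := by
    rw [one_sub_mobius one_pos hw1 hx, hdenom]
    field_simp
    ring
  rw [hcomp, hdenom, ← ENNReal.ofReal_mul (by positivity), ← ENNReal.ofReal_mul (by positivity),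
    div_rpow hw1.le hd.le, show -(b + c - a) = -(c + b) - -a by ring, rpow_sub hd]
  congr 1
  ring

/-! ### Euler double integrals and `₃F₂(1)` -/

/-- The Euler double integral `∬ (1 - x y) ^ (-a)` against the Jacobi weights with parameters
`(b, b')` in `x` and `(c, c')` in `y`; up to Beta factors it is `₃F₂(a, b, c; b + b', c + c'; 1)`.
It takes values in `[0, ∞]` so that Tonelli's theorem applies without integrability conditions. -/
noncomputable def eulerDouble (a b b' c c' : ℝ) : ℝ≥0∞ :=
  ∫⁻ y, ∫⁻ x, ENNReal.ofReal ((1 - x * y) ^ (-a)) ∂jacobiMeasure b b' ∂jacobiMeasure c c'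

lemma eulerDouble_comm (a b b' c c' : ℝ) : eulerDouble a b b' c c' = eulerDouble a c c' b b' := by
  rw [eulerDouble, lintegral_lintegral_swap (by fun_prop)]
  simp only [eulerDouble, mul_comm]

lemma eulerDouble_thomae (a b b' c c' : ℝ) :
    eulerDouble a b b' c c' = eulerDouble (b + b' - a) b' b c (c' + (b' - a)) := by
  rw [eulerDouble, lintegral_jacobiMeasure_congr _ _
    fun y hy => lintegral_jacobiMeasure_one_sub_mul_rpow a b b' hy,
    lintegral_jacobiMeasure_one_sub_rpow_mul, eulerDouble]

lemma ofReal_one_sub_mul_rpow_neg {a x y : ℝ} (ha : 0 < a) (hx : x ∈ Ioo (0 : ℝ) 1)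
    (hy : y ∈ Ioo (0 : ℝ) 1) :
    ENNReal.ofReal ((1 - x * y) ^ (-a)) = ∑' n : ℕ, ENNReal.ofReal (poch a n / n.factorial) *
      (ENNReal.ofReal (x ^ n) * ENNReal.ofReal (y ^ n)) := by
  have hx0 : 0 < x := hx.1
  have hy0 : 0 < y := hy.1
  have hsum := hasSum_poch_div_factorial_mul_pow a (z := x * y)
    (by rw [abs_of_pos (mul_pos hx0 hy0)]; exact (mul_mem_Ioo_zero_one hx hy).2)
  have hcoeff (n : ℕ) : 0 ≤ poch a n / n.factorial := by
    have := poch_pos ha n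
    positivity
  rw [← hsum.tsum_eq, ENNReal.ofReal_tsum_of_nonneg
    (fun n => mul_nonneg (hcoeff n) (by positivity)) hsum.summable]
  refine tsum_congr fun n => ?_
  rw [ENNReal.ofReal_mul (hcoeff n), mul_pow, ENNReal.ofReal_mul (by positivity)]

lemma eulerDouble_eq_tsum {a b b' c c' : ℝ} (ha : 0 < a) (hb : 0 < b) (hb' : 0 < b') (hc : 0 < c)
    (hc' : 0 < c') :
    eulerDouble a b b' c c' = ∑' n : ℕ, ENNReal.ofReal (poch a n / n.factorial) *
      (ENNReal.ofReal (betaFn (b + n) b') * ENNReal.ofReal (betaFn (c + n) c')) := by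
  have inner (y : ℝ) (hy : y ∈ Ioo (0 : ℝ) 1) :
      ∫⁻ x, ENNReal.ofReal ((1 - x * y) ^ (-a)) ∂jacobiMeasure b b' =
        ∑' n : ℕ, ENNReal.ofReal (poch a n / n.factorial) *
          (ENNReal.ofReal (betaFn (b + n) b') * ENNReal.ofReal (y ^ n)) := by
    rw [lintegral_jacobiMeasure_congr _ _ fun x hx => ofReal_one_sub_mul_rpow_neg ha hx hy,
      lintegral_tsum (fun n => by fun_prop)]
    refine tsum_congr fun n => ?_
    rw [lintegral_const_mul' _ _ ENNReal.ofReal_ne_top,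
      lintegral_mul_const' _ _ ENNReal.ofReal_ne_top, lintegral_jacobiMeasure_pow hb hb']
  rw [eulerDouble, lintegral_jacobiMeasure_congr _ _ inner, lintegral_tsum (fun n => by fun_prop)]
  refine tsum_congr fun n => ?_
  rw [lintegral_const_mul' _ _ ENNReal.ofReal_ne_top,
    lintegral_const_mul' _ _ ENNReal.ofReal_ne_top, lintegral_jacobiMeasure_pow hc hc']

/-- If the series diverges, both sides are `0`. -/
lemma toReal_eulerDouble {a b b' c c' : ℝ} (ha : 0 < a) (hb : 0 < b) (hb' : 0 < b') (hc : 0 < c)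
    (hc' : 0 < c') :
    (eulerDouble a b b' c c').toReal =
      betaFn b b' * betaFn c c' * threeF2 a b c (b + b') (c + c') := by
  rw [eulerDouble_eq_tsum ha hb hb' hc hc', ENNReal.tsum_toReal_eq (fun _ => by finiteness),
    threeF2, ← tsum_mul_left]
  refine tsum_congr fun n => ?_
  have hpoch := poch_pos ha n
  have hbeta_b := betaFn_pos (add_pos_of_pos_of_nonneg hb n.cast_nonneg) hb'
  have hbeta_c := betaFn_pos (add_pos_of_pos_of_nonneg hc n.cast_nonneg) hc'
  rw [ENNReal.toReal_mul, ENNReal.toReal_mul, ENNReal.toReal_ofReal (by positivity),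
    ENNReal.toReal_ofReal hbeta_b.le, ENNReal.toReal_ofReal hbeta_c.le, betaFn_add_nat hb hb',
    betaFn_add_nat hc hc']
  ring

lemma one_sub_mul_rpow_neg_le {d e x y : ℝ} (hd : 0 ≤ d) (he : 0 ≤ e) (hx : x ∈ Ioo (0 : ℝ) 1)
    (hy : y ∈ Ioo (0 : ℝ) 1) :
    (1 - x * y) ^ (-(d + e)) ≤ (1 - x) ^ (-d) * (1 - y) ^ (-e) := by
  have hx1 : 0 < 1 - x := sub_pos.2 hx.2
  have hy1 : 0 < 1 - y := sub_pos.2 hy.2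
  have hxy := one_sub_mul_pos hx hy
  rw [neg_add, rpow_add hxy]
  gcongr ?_ * ?_
  · exact rpow_le_rpow_of_nonpos hx1 (by nlinarith [hx.1]) (neg_nonpos.2 hd)
  · exact rpow_le_rpow_of_nonpos hy1 (by nlinarith [hy.1]) (neg_nonpos.2 he)

lemma eulerDouble_ne_top {a b b' c c' : ℝ} (ha : 0 ≤ a) (hb : 0 < b) (hb' : 0 < b') (hc : 0 < c)
    (hc' : 0 < c') (h : a < b' + c') : eulerDouble a b b' c c' ≠ ⊤ := by
  obtain ⟨d, e, hd, he, hdb, hec, rfl⟩ :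
      ∃ d e, 0 ≤ d ∧ 0 ≤ e ∧ d < b' ∧ e < c' ∧ d + e = a := by
    have hsum : 0 < b' + c' := add_pos hb' hc'
    refine ⟨a / (b' + c') * b', a / (b' + c') * c', by positivity, by positivity, ?_, ?_, ?_⟩
    · exact mul_lt_of_lt_one_left hb' ((div_lt_one hsum).2 h)
    · exact mul_lt_of_lt_one_left hc' ((div_lt_one hsum).2 h)
    · field_simp
  refine ne_top_of_le_ne_top
    (b := ENNReal.ofReal (betaFn c (c' + -e)) * ENNReal.ofReal (betaFn b (b' + -d)))
    (by finiteness) ?_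
  rw [← lintegral_jacobiMeasure_one hb (by linarith),
    ← lintegral_jacobiMeasure_one hc (by linarith),
    ← lintegral_jacobiMeasure_one_sub_rpow_mul b, ← lintegral_jacobiMeasure_one_sub_rpow_mul c,
    ← lintegral_mul_const _ (by fun_prop), eulerDouble]
  refine lintegral_jacobiMeasure_mono c c' fun y hy => ?_
  rw [mul_one, ← lintegral_const_mul _ (by fun_prop)]
  refine lintegral_jacobiMeasure_mono b b' fun x hx => ?_
  have : 0 < 1 - x := sub_pos.2 hx.2
  have hy1 : 0 < 1 - y := sub_pos.2 hy.2
  rw [mul_one, ← ENNReal.ofReal_mul (by positivity), mul_comm ((1 - y) ^ (-e))]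
  exact ENNReal.ofReal_le_ofReal (one_sub_mul_rpow_neg_le hd he hx hy)

/-- The Beta integral `∫₀¹ y ^ (a - 1) (1 - y) ^ (b - 1) ₂F₁(1/2, 1/2; 1; y) dy`, that is, the Beta
function weighted by a complete elliptic integral. Up to an algebraic factor, `Fval r s` is its
value at `(r, s - r)`. -/
noncomputable def ellipticBeta (a b : ℝ) : ℝ :=
  betaFn a b * threeF2 (1 / 2) (1 / 2) a 1 (a + b)

lemma toReal_eulerDouble_half {a b : ℝ} (ha : 0 < a) (hb : 0 < b) :
    (eulerDouble (1 / 2) a b (1 / 2) (1 / 2)).toReal = π * ellipticBeta a b := by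
  rw [eulerDouble_comm, toReal_eulerDouble one_half_pos one_half_pos one_half_pos ha hb,
    betaFn_half_half, add_halves, ellipticBeta, mul_assoc]

lemma threeF2_swap_upper (a1 a2 a3 b1 b2 : ℝ) :
    threeF2 a1 a2 a3 b1 b2 = threeF2 a2 a1 a3 b1 b2 := by
  simp only [threeF2, mul_comm]

lemma threeF2_swap_lower (a1 a2 a3 b1 b2 : ℝ) :
    threeF2 a1 a2 a3 b1 b2 = threeF2 a1 a2 a3 b2 b1 := by
  simp only [threeF2, mul_comm]

lemma pi_mul_ellipticBeta {a b : ℝ} (ha : 0 < a) (hb : 0 < b) (hab : 1 / 2 < a + b) :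
    π * ellipticBeta a b = betaFn b a * betaFn (1 / 2) b *
      threeF2 (a + b - 1 / 2) b (1 / 2) (a + b) (b + 1 / 2) := by
  rw [← toReal_eulerDouble_half ha hb, eulerDouble_thomae, add_sub_cancel,
    toReal_eulerDouble (sub_pos.2 hab) hb ha one_half_pos hb, add_comm b a, add_comm (1 / 2) b]

lemma ellipticBeta_transformation {a b : ℝ} (ha : 0 < a) (ha1 : a < 1) (hb : 0 < b)
    (hab : 1 / 2 < a + b) :
    ellipticBeta a b * (Gamma (1 - a) * Gamma (a + b - 1 / 2) ^ 2) =
      ellipticBeta (1 - a) (a + b - 1 / 2) * (Gamma a * Gamma b ^ 2) := by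
  have hleft := pi_mul_ellipticBeta ha hb hab
  have hright := pi_mul_ellipticBeta (sub_pos.2 ha1) (sub_pos.2 hab) (by linarith)
  rw [show 1 - a + (a + b - 1 / 2) = b + 1 / 2 by ring, add_sub_cancel_right, sub_add_cancel,
    threeF2_swap_lower, threeF2_swap_upper] at hright
  refine mul_left_cancel₀ pi_ne_zero ?_
  rw [← mul_assoc, ← mul_assoc π, hleft, hright]
  simp only [betaFn]
  rw [show a + b - 1 / 2 + (1 - a) = b + 1 / 2 by ring, add_comm b a, add_comm (1 / 2) b,
    add_sub_cancel]
  ring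

/-! ### The three-term relation -/

/-- The redundant factors `1 *` match the shape of `lintegral_jacobiMeasure_inv`. -/
lemma inv_mul_partial_fractions {w t s : ℝ} (hw : w ∈ Ioo (0 : ℝ) 1) (ht : t ∈ Ioo (0 : ℝ) 1)
    (hs : s ∈ Ioo (0 : ℝ) 1) :
    (1 - t * w)⁻¹ * (t * (1 - s) + 1 * s)⁻¹ =
      w * ((1 * (1 - t) + (1 - w) * t)⁻¹ * (1 * (1 - s) + w * s)⁻¹) +
        (1 - s) * ((1 - s * (1 - w))⁻¹ * (s * (1 - t) + 1 * t)⁻¹) := by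
  have htw := (one_sub_mul_pos ht hw).ne'
  have hsw : 1 - s * (1 - w) ≠ 0 := by nlinarith [hs.2, mul_pos hs.1 hw.1]
  have hts : t + s - t * s ≠ 0 := by nlinarith [hs.1, mul_pos ht.1 (sub_pos.2 hs.2)]
  rw [show t * (1 - s) + 1 * s = t + s - t * s by ring,
    show s * (1 - t) + 1 * t = t + s - t * s by ring,
    show 1 * (1 - t) + (1 - w) * t = 1 - t * w by ring,
    show 1 * (1 - s) + w * s = 1 - s * (1 - w) by ring]
  field_simp
  ring

lemma lintegral_mul_lintegral_inv {b c γ : ℝ} (hγ : 0 < γ) (hγ1 : γ < 1) (f : ℝ → ℝ≥0∞) :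
    ∫⁻ t, f t * ∫⁻ s, ENNReal.ofReal ((t * (1 - s) + 1 * s)⁻¹) ∂jacobiMeasure (1 - γ) γ
        ∂jacobiMeasure b c =
      ENNReal.ofReal (betaFn (1 - γ) γ) * ∫⁻ t, f t ∂jacobiMeasure (b - γ) c := by
  have hbeta := betaFn_pos (sub_pos.2 hγ1) hγ
  rw [sub_eq_add_neg b γ, ← lintegral_jacobiMeasure_rpow_mul,
    ← lintegral_const_mul' _ _ ENNReal.ofReal_ne_top]
  refine lintegral_jacobiMeasure_congr b c fun t ht => ?_
  rw [lintegral_jacobiMeasure_inv ht.1 one_pos (sub_pos.2 hγ1) hγ (sub_add_cancel 1 γ),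
    one_rpow, mul_one, ENNReal.ofReal_mul hbeta.le]
  ring

lemma ofReal_inv_mul_partial_fractions {w t s : ℝ} (hw : w ∈ Ioo (0 : ℝ) 1)
    (ht : t ∈ Ioo (0 : ℝ) 1) (hs : s ∈ Ioo (0 : ℝ) 1) :
    ENNReal.ofReal ((1 - t * w)⁻¹) * ENNReal.ofReal ((t * (1 - s) + 1 * s)⁻¹) =
      ENNReal.ofReal w * (ENNReal.ofReal ((1 * (1 - t) + (1 - w) * t)⁻¹) *
        ENNReal.ofReal ((1 * (1 - s) + w * s)⁻¹)) +
      ENNReal.ofReal ((1 - s) ^ (1 : ℝ)) * ENNReal.ofReal ((1 - s * (1 - w))⁻¹) *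
        ENNReal.ofReal ((s * (1 - t) + 1 * t)⁻¹) := by
  have hw0 : 0 < w := hw.1
  have hs1 : 0 < 1 - s := sub_pos.2 hs.2
  have htw := one_sub_mul_pos ht hw
  have hw' : 1 - w ∈ Ioo (0 : ℝ) 1 := ⟨sub_pos.2 hw.2, sub_lt_self 1 hw0⟩
  have hsw := one_sub_mul_pos hs hw'
  have hdenom_t := mobius_denom_pos one_pos hw'.1 ht
  have hdenom_s := mobius_denom_pos one_pos hw0 hs
  have hdenom_st := mobius_denom_pos hs.1 one_pos ht
  rw [rpow_one, ← ENNReal.ofReal_mul (by positivity), ← ENNReal.ofReal_mul (by positivity),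
    ← ENNReal.ofReal_mul (by positivity), ← ENNReal.ofReal_mul (by positivity),
    ← ENNReal.ofReal_mul (by positivity), ← ENNReal.ofReal_add (by positivity) (by positivity),
    mul_assoc, inv_mul_partial_fractions hw ht hs]

lemma lintegral_lintegral_inv_mul_inv {β γ w : ℝ} (hβ : 0 < β) (hβ1 : β < 1) (hγ : 0 < γ)
    (hγ1 : γ < 1) (hw : w ∈ Ioo (0 : ℝ) 1) :
    ∫⁻ t, ∫⁻ s, ENNReal.ofReal w * (ENNReal.ofReal ((1 * (1 - t) + (1 - w) * t)⁻¹) *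
        ENNReal.ofReal ((1 * (1 - s) + w * s)⁻¹))
        ∂jacobiMeasure (1 - γ) γ ∂jacobiMeasure (1 - β) β =
      ENNReal.ofReal (betaFn (1 - β) β * betaFn (1 - γ) γ * (w ^ γ * (1 - w) ^ (β - 1))) := by
  have hw0 : 0 < w := hw.1
  have hw1 : 0 < 1 - w := sub_pos.2 hw.2
  have hbeta_β := betaFn_pos (sub_pos.2 hβ1) hβ
  have hbeta_γ := betaFn_pos (sub_pos.2 hγ1) hγ
  simp_rw [lintegral_const_mul' _ _ ENNReal.ofReal_ne_top]
  rw [lintegral_jacobiMeasure_inv one_pos hw0 (sub_pos.2 hγ1) hγ (sub_add_cancel 1 γ),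
    lintegral_mul_const' _ _ ENNReal.ofReal_ne_top,
    lintegral_jacobiMeasure_inv one_pos hw1 (sub_pos.2 hβ1) hβ (sub_add_cancel 1 β),
    ← ENNReal.ofReal_mul (by positivity), ← ENNReal.ofReal_mul (by positivity), one_rpow, one_rpow,
    neg_sub, neg_sub, rpow_sub_one hw0.ne']
  congr 1
  field_simp

/-- A real-variable form of the three-term connection formula between the solutions of the
hypergeometric equation at `0` and at `1`. -/
lemma lintegral_one_sub_mul_inv_three_term {β γ w : ℝ} (hβ : 0 < β) (hβ1 : β < 1) (hγ : 0 < γ)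
    (hγ1 : γ < 1) (hw : w ∈ Ioo (0 : ℝ) 1) :
    ENNReal.ofReal (betaFn (1 - γ) γ) *
        ∫⁻ t, ENNReal.ofReal ((1 - t * w)⁻¹) ∂jacobiMeasure (1 - β - γ) β =
      ENNReal.ofReal (betaFn (1 - β) β * betaFn (1 - γ) γ * (w ^ γ * (1 - w) ^ (β - 1))) +
        ENNReal.ofReal (betaFn (1 - β) β) *
          ∫⁻ s, ENNReal.ofReal ((1 - s * (1 - w))⁻¹) ∂jacobiMeasure (1 - γ - β) (γ + 1) := by
  rw [← lintegral_jacobiMeasure_one_sub_rpow_mul, ← lintegral_mul_lintegral_inv hγ hγ1,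
    ← lintegral_mul_lintegral_inv hβ hβ1, ← lintegral_lintegral_inv_mul_inv hβ hβ1 hγ hγ1 hw]
  calc
    _ = ∫⁻ t, ∫⁻ s, ENNReal.ofReal ((1 - t * w)⁻¹) * ENNReal.ofReal ((t * (1 - s) + 1 * s)⁻¹)
        ∂jacobiMeasure (1 - γ) γ ∂jacobiMeasure (1 - β) β :=
      lintegral_congr fun t => (lintegral_const_mul' _ _ ENNReal.ofReal_ne_top).symm
    _ = ∫⁻ t, ∫⁻ s, ENNReal.ofReal w * (ENNReal.ofReal ((1 * (1 - t) + (1 - w) * t)⁻¹) *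
          ENNReal.ofReal ((1 * (1 - s) + w * s)⁻¹)) + ENNReal.ofReal ((1 - s) ^ (1 : ℝ)) *
          ENNReal.ofReal ((1 - s * (1 - w))⁻¹) * ENNReal.ofReal ((s * (1 - t) + 1 * t)⁻¹)
        ∂jacobiMeasure (1 - γ) γ ∂jacobiMeasure (1 - β) β :=
      lintegral_jacobiMeasure_congr _ _ fun t ht => lintegral_jacobiMeasure_congr _ _ fun s hs =>
        ofReal_inv_mul_partial_fractions hw ht hs
    _ = _ := by
      rw [lintegral_congr fun t => lintegral_add_left (by fun_prop) _,
        lintegral_add_left (by fun_prop)]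
      congr 1
      rw [lintegral_lintegral_swap (by fun_prop)]
      exact lintegral_congr fun s => lintegral_const_mul' _ _ (by finiteness)

lemma lintegral_inv_one_sub_mul_mul {t u : ℝ} (ht : t ∈ Ioo (0 : ℝ) 1) (hu : u ∈ Ioo (0 : ℝ) 1) :
    ∫⁻ v, ENNReal.ofReal ((1 - t * (v * u))⁻¹) ∂jacobiMeasure (1 / 2) (1 / 2) =
      ENNReal.ofReal π * ENNReal.ofReal ((1 - t * u) ^ (-(1 / 2) : ℝ)) := by
  have h := lintegral_jacobiMeasure_inv one_pos (one_sub_mul_pos ht hu) one_half_pos one_half_pos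
    (add_halves 1)
  rw [betaFn_half_half, one_rpow, one_mul, ENNReal.ofReal_mul pi_pos.le] at h
  rw [← h]
  exact lintegral_congr fun v => by ring_nf

lemma lintegral_inv_one_sub_mul_one_sub_mul {t u : ℝ} (ht : t ∈ Ioo (0 : ℝ) 1)
    (hu : u ∈ Ioo (0 : ℝ) 1) :
    ∫⁻ v, ENNReal.ofReal ((1 - t * (1 - v * u))⁻¹) ∂jacobiMeasure (1 / 2) (1 / 2) =
      ENNReal.ofReal π * (ENNReal.ofReal ((1 - t) ^ (-(1 / 2) : ℝ)) *
        ENNReal.ofReal ((1 - t * (1 - u)) ^ (-(1 / 2) : ℝ))) := by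
  have ht1 : 0 < 1 - t := sub_pos.2 ht.2
  have htu := one_sub_mul_pos ht ⟨sub_pos.2 hu.2, sub_lt_self 1 hu.1⟩
  have h := lintegral_jacobiMeasure_inv ht1 htu one_half_pos one_half_pos (add_halves 1)
  rw [betaFn_half_half, ENNReal.ofReal_mul pi_pos.le, ENNReal.ofReal_mul (by positivity)] at h
  rw [← h]
  exact lintegral_congr fun v => by ring_nf

lemma lintegral_arcsine_inv_one_sub_mul (b c : ℝ) :
    ∫⁻ u, ∫⁻ v, ∫⁻ t, ENNReal.ofReal ((1 - t * (v * u))⁻¹) ∂jacobiMeasure b c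
        ∂jacobiMeasure (1 / 2) (1 / 2) ∂jacobiMeasure (1 / 2) (1 / 2) =
      ENNReal.ofReal π * eulerDouble (1 / 2) b c (1 / 2) (1 / 2) := by
  rw [eulerDouble, ← lintegral_const_mul' _ _ ENNReal.ofReal_ne_top]
  refine lintegral_jacobiMeasure_congr _ _ fun u hu => ?_
  rw [lintegral_lintegral_swap (by fun_prop), ← lintegral_const_mul' _ _ ENNReal.ofReal_ne_top]
  exact lintegral_jacobiMeasure_congr _ _ fun t ht => lintegral_inv_one_sub_mul_mul ht hu

lemma lintegral_arcsine_inv_one_sub_mul_one_sub (b c : ℝ) :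
    ∫⁻ u, ∫⁻ v, ∫⁻ t, ENNReal.ofReal ((1 - t * (1 - v * u))⁻¹) ∂jacobiMeasure b c
        ∂jacobiMeasure (1 / 2) (1 / 2) ∂jacobiMeasure (1 / 2) (1 / 2) =
      ENNReal.ofReal π * eulerDouble (1 / 2) b (c - 1 / 2) (1 / 2) (1 / 2) := by
  rw [eulerDouble, ← lintegral_const_mul' _ _ ENNReal.ofReal_ne_top, sub_eq_add_neg]
  refine (lintegral_jacobiMeasure_congr _ _ fun u hu => ?_).trans
    (lintegral_jacobiMeasure_comp_one_sub _ _ _)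
  rw [lintegral_lintegral_swap (by fun_prop), ← lintegral_jacobiMeasure_one_sub_rpow_mul,
    ← lintegral_const_mul' _ _ ENNReal.ofReal_ne_top]
  exact lintegral_jacobiMeasure_congr _ _ fun t ht => lintegral_inv_one_sub_mul_one_sub_mul ht hu

lemma lintegral_arcsine_rpow_mul_one_sub_rpow (β γ : ℝ) :
    ∫⁻ u, ∫⁻ v, ENNReal.ofReal ((v * u) ^ γ * (1 - v * u) ^ (β - 1))
        ∂jacobiMeasure (1 / 2) (1 / 2) ∂jacobiMeasure (1 / 2) (1 / 2) =
      eulerDouble (1 / 2) β (γ + 1 / 2) (1 / 2) (1 / 2) := by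
  have hthomae : eulerDouble (1 / 2) β (γ + 1 / 2) (1 / 2) (1 / 2) =
      eulerDouble (1 - β) (1 / 2 + γ) (1 / 2) (1 / 2 + γ) (1 / 2) := by
    rw [eulerDouble_thomae, eulerDouble_comm, eulerDouble_thomae]
    ring_nf
  rw [hthomae, eulerDouble, ← lintegral_jacobiMeasure_rpow_mul]
  refine lintegral_jacobiMeasure_congr _ _ fun u hu => ?_
  rw [← lintegral_jacobiMeasure_rpow_mul, ← lintegral_const_mul' _ _ ENNReal.ofReal_ne_top]
  refine lintegral_jacobiMeasure_congr _ _ fun v hv => ?_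
  have hu0 : 0 < u := hu.1
  have hv0 : 0 < v := hv.1
  rw [mul_rpow hv0.le hu0.le, neg_sub, mul_comm (v ^ γ), mul_assoc,
    ENNReal.ofReal_mul (by positivity), ENNReal.ofReal_mul (by positivity)]

lemma eulerDouble_three_term {β γ : ℝ} (hβ : 0 < β) (hβ1 : β < 1) (hγ : 0 < γ) (hγ1 : γ < 1) :
    ENNReal.ofReal (betaFn (1 - γ) γ) *
        (ENNReal.ofReal π * eulerDouble (1 / 2) (1 - β - γ) β (1 / 2) (1 / 2)) =
      ENNReal.ofReal (betaFn (1 - β) β * betaFn (1 - γ) γ) *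
          eulerDouble (1 / 2) β (γ + 1 / 2) (1 / 2) (1 / 2) +
        ENNReal.ofReal (betaFn (1 - β) β) * (ENNReal.ofReal π *
          eulerDouble (1 / 2) (1 - γ - β) (γ + 1 - 1 / 2) (1 / 2) (1 / 2)) := by
  have hbeta_β := betaFn_pos (sub_pos.2 hβ1) hβ
  have hbeta_γ := betaFn_pos (sub_pos.2 hγ1) hγ
  rw [← lintegral_arcsine_inv_one_sub_mul, ← lintegral_arcsine_inv_one_sub_mul_one_sub,
    ← lintegral_arcsine_rpow_mul_one_sub_rpow]
  simp_rw [← lintegral_const_mul' _ _ ENNReal.ofReal_ne_top]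
  rw [← lintegral_add_left (by fun_prop)]
  refine lintegral_jacobiMeasure_congr _ _ fun u hu => ?_
  rw [← lintegral_add_left (by fun_prop)]
  refine lintegral_jacobiMeasure_congr _ _ fun v hv => ?_
  rw [← ENNReal.ofReal_mul (by positivity)]
  simp_rw [lintegral_const_mul' _ _ ENNReal.ofReal_ne_top]
  exact lintegral_one_sub_mul_inv_three_term hβ hβ1 hγ hγ1 (mul_mem_Ioo_zero_one hv hu)

lemma eulerDouble_half_ne_top {a b : ℝ} (ha : 0 < a) (hb : 0 < b) :
    eulerDouble (1 / 2) a b (1 / 2) (1 / 2) ≠ ⊤ :=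
  eulerDouble_ne_top one_half_pos.le ha hb one_half_pos one_half_pos (by linarith)

lemma ellipticBeta_three_term {α β γ : ℝ} (hα : 0 < α) (hβ : 0 < β) (hγ : 0 < γ)
    (h : α + β + γ = 1) :
    sin (π * β) * ellipticBeta α β =
      ellipticBeta β (γ + 1 / 2) + sin (π * γ) * ellipticBeta α (γ + 1 / 2) := by
  have hbeta_β := betaFn_pos (sub_pos.2 (by linarith : β < 1)) hβ
  have hbeta_γ := betaFn_pos (sub_pos.2 (by linarith : γ < 1)) hγ
  have hsin_β : 0 < sin (π * β) := sin_pos_of_pos_of_lt_pi (by positivity) (by nlinarith [pi_pos])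
  have hsin_γ : 0 < sin (π * γ) := sin_pos_of_pos_of_lt_pi (by positivity) (by nlinarith [pi_pos])
  have hγ' : 0 < γ + 1 / 2 := by positivity
  have hthree := congrArg ENNReal.toReal
    (eulerDouble_three_term hβ (by linarith) hγ (by linarith : γ < 1))
  rw [show 1 - β - γ = α by linarith, show 1 - γ - β = α by linarith,
    show γ + 1 - 1 / 2 = γ + 1 / 2 by ring,
    ENNReal.toReal_add (ENNReal.mul_ne_top ENNReal.ofReal_ne_top (eulerDouble_half_ne_top hβ hγ'))
      (by have := eulerDouble_half_ne_top hα hγ'; finiteness)] at hthree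
  simp only [ENNReal.toReal_mul, ENNReal.toReal_ofReal pi_pos.le,
    ENNReal.toReal_ofReal hbeta_β.le, ENNReal.toReal_ofReal hbeta_γ.le,
    ENNReal.toReal_ofReal (mul_pos hbeta_β hbeta_γ).le, toReal_eulerDouble_half hα hβ,
    toReal_eulerDouble_half hα hγ', toReal_eulerDouble_half hβ hγ'] at hthree
  rw [betaFn_comm (1 - β), betaFn_comm (1 - γ), betaFn_one_sub, betaFn_one_sub] at hthree
  generalize γ + 1 / 2 = δ at hthree ⊢
  field_simp at hthree
  linarith

/-! ### Specialisations by Gamma duplication -/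

lemma sq_Gamma_mul_Gamma_add_half (x : ℝ) :
    (Gamma x * Gamma (x + 1 / 2)) ^ 2 = Gamma (2 * x) ^ 2 * 2 ^ (2 - 4 * x) * π := by
  rw [Gamma_mul_Gamma_add_half, mul_pow, mul_pow, sq_sqrt pi_pos.le, ← rpow_mul_natCast two_pos.le]
  ring_nf

lemma ellipticBeta_add_half_right {x : ℝ} (hx : 0 < x) (hx1 : x < 1) :
    ellipticBeta x (x + 1 / 2) = 2 ^ (2 - 4 * x) * sin (π * x) * ellipticBeta (1 - x) (2 * x) := by
  have hsin : sin (π * x) ≠ 0 :=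
    (sin_pos_of_pos_of_lt_pi (by positivity) (by nlinarith [pi_pos])).ne'
  have hreflection : Gamma x * Gamma (1 - x) * sin (π * x) = π := by
    rw [Gamma_mul_Gamma_one_sub, div_mul_cancel₀ _ hsin]
  have htrans := ellipticBeta_transformation hx hx1 (b := x + 1 / 2) (by positivity) (by linarith)
  rw [show x + (x + 1 / 2) - 1 / 2 = 2 * x by ring] at htrans
  have hGamma := Gamma_pos_of_pos (mul_pos two_pos hx)
  refine mul_left_cancel₀ (mul_ne_zero pi_ne_zero (pow_ne_zero 2 hGamma.ne')) ?_
  linear_combination (Gamma x * sin (π * x)) * htrans -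
    ellipticBeta x (x + 1 / 2) * Gamma (2 * x) ^ 2 * hreflection +
    sin (π * x) * ellipticBeta (1 - x) (2 * x) * sq_Gamma_mul_Gamma_add_half x

lemma ellipticBeta_add_half_left {x : ℝ} (hx : 0 < x) (hx1 : x < 1 / 2) :
    ellipticBeta (x + 1 / 2) x =
      2 ^ (2 - 4 * x) * cos (π * x) * ellipticBeta (1 / 2 - x) (2 * x) := by
  have hcos : cos (π * x) ≠ 0 :=
    (cos_pos_of_mem_Ioo ⟨by nlinarith [pi_pos], by nlinarith [pi_pos]⟩).ne'
  have hreflection : Gamma (x + 1 / 2) * Gamma (1 - (x + 1 / 2)) * cos (π * x) = π := by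
    rw [Gamma_mul_Gamma_one_sub, mul_add, mul_one_div, sin_add_pi_div_two, div_mul_cancel₀ _ hcos]
  have htrans := ellipticBeta_transformation (a := x + 1 / 2) (by positivity) (by linarith) hx
    (by linarith)
  rw [show x + 1 / 2 + x - 1 / 2 = 2 * x by ring] at htrans
  rw [show 1 / 2 - x = 1 - (x + 1 / 2) by ring]
  have hGamma := Gamma_pos_of_pos (mul_pos two_pos hx)
  refine mul_left_cancel₀ (mul_ne_zero pi_ne_zero (pow_ne_zero 2 hGamma.ne')) ?_
  linear_combination (Gamma (x + 1 / 2) * cos (π * x)) * htrans -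
    ellipticBeta (x + 1 / 2) x * Gamma (2 * x) ^ 2 * hreflection +
    cos (π * x) * ellipticBeta (1 - (x + 1 / 2)) (2 * x) * sq_Gamma_mul_Gamma_add_half x

lemma ellipticBeta_one_sub {x : ℝ} (hx : 0 < x) (hx1 : x < 1 / 4) :
    2 ^ (1 - 4 * x) * sin (2 * π * x) * ellipticBeta (1 - x) (2 * x) =
      ellipticBeta (x + 1 / 2) (1 - 2 * x) + cos (2 * π * x) * ellipticBeta x (1 - 2 * x) := by
  have hthree := ellipticBeta_three_term hx (β := x + 1 / 2) (γ := 1 / 2 - 2 * x) (by positivity)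
    (by linarith) (by ring)
  rw [show π * (x + 1 / 2) = π * x + π / 2 by ring, sin_add_pi_div_two,
    show π * (1 / 2 - 2 * x) = π / 2 - 2 * π * x by ring, sin_pi_div_two_sub,
    show 1 / 2 - 2 * x + 1 / 2 = 1 - 2 * x by ring,
    ellipticBeta_add_half_right hx (by linarith)] at hthree
  rw [← hthree, mul_assoc 2 π, sin_two_mul, show 2 - 4 * x = 1 - 4 * x + 1 by ring,
    rpow_add_one two_ne_zero]
  ring

lemma ellipticBeta_half_sub {x : ℝ} (hx : 0 < x) (hx1 : x < 1 / 4) :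
    2 ^ (1 - 4 * x) * sin (2 * π * x) * ellipticBeta (1 / 2 - x) (2 * x) =
      ellipticBeta x (1 - 2 * x) + cos (2 * π * x) * ellipticBeta (x + 1 / 2) (1 - 2 * x) := by
  have hthree := ellipticBeta_three_term (α := x + 1 / 2) (γ := 1 / 2 - 2 * x) (by positivity) hx
    (by linarith) (by ring)
  rw [show π * (1 / 2 - 2 * x) = π / 2 - 2 * π * x by ring, sin_pi_div_two_sub,
    show 1 / 2 - 2 * x + 1 / 2 = 1 - 2 * x by ring,
    ellipticBeta_add_half_left hx (by linarith)] at hthree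
  rw [← hthree, mul_assoc 2 π, sin_two_mul, show 2 - 4 * x = 1 - 4 * x + 1 by ring,
    rpow_add_one two_ne_zero]
  ring

/-! ### Values at eighths -/

lemma Fval_eq_ellipticBeta (r s : ℚ) :
    Fval r s = 2 ^ (1 - 4 * r : ℝ) / (2 * r.den) * ellipticBeta r (s - r) := by
  rw [Fval, ellipticBeta, add_sub_cancel]
  ring

lemma Fval_odd_div_eight (k : ℕ) (s : ℚ) :
    Fval ((2 * k + 1) / 8) s =
      √2 / (16 * 2 ^ k) * ellipticBeta ((2 * k + 1) / 8) (s - (2 * k + 1) / 8) := by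
  have hden : ((2 * k + 1) / 8 : ℚ).den = 8 := by
    have hcoprime : Nat.Coprime (2 * k + 1) (2 ^ 3) :=
      Nat.Coprime.pow_right 3 (Nat.coprime_two_right.2 ⟨k, rfl⟩)
    have hden' := Rat.den_div_eq_of_coprime (a := (2 * k + 1 : ℕ)) (b := 8) (by norm_num) hcoprime
    push_cast at hden'
    exact Nat.cast_injective hden'
  have hrpow : (2 : ℝ) ^ (1 - 4 * ((2 * k + 1) / 8) : ℝ) = √2 / 2 ^ k := by
    rw [show 1 - 4 * ((2 * k + 1) / 8 : ℝ) = 1 / 2 - k by ring, rpow_sub two_pos, rpow_natCast,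
      sqrt_eq_rpow]
  rw [Fval_eq_ellipticBeta, hden]
  push_cast
  rw [hrpow]
  ring

lemma four_mul_sin_pi_div_eight_sq : 4 * sin (π / 8) ^ 2 = 2 - √2 := by
  have hsqrt_two : √2 ≤ 2 := (sqrt_le_left two_pos.le).2 (by norm_num)
  rw [sin_pi_div_eight, div_pow, sq_sqrt (sub_nonneg.2 hsqrt_two)]
  ring

lemma cos_pi_div_eight_eq_mul_sin : cos (π / 8) = (1 + √2) * sin (π / 8) := by
  have hsin : sin (π / 8) ≠ 0 :=
    (sin_pos_of_pos_of_lt_pi (by positivity) (by linarith [pi_pos])).ne'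
  have hdouble : 2 * sin (π / 8) * cos (π / 8) = √2 / 2 := by
    rw [← sin_two_mul, show 2 * (π / 8) = π / 4 by ring, sin_pi_div_four]
  refine mul_left_cancel₀ hsin ?_
  linear_combination hdouble / 2 - (1 + √2) / 4 * four_mul_sin_pi_div_eight_sq +
    sq_sqrt (zero_le_two (α := ℝ)) / 4

lemma two_rpow_three_halves : (2 : ℝ) ^ (3 / 2 : ℝ) = 2 * √2 := by
  rw [sqrt_eq_rpow, ← rpow_one_add' two_pos.le (by norm_num)]
  norm_num

lemma ellipticBeta_one_eighth_five_eighths :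
    ellipticBeta (1 / 8) (5 / 8) = 2 * √2 * sin (π / 8) * ellipticBeta (7 / 8) (1 / 4) := by
  have h := ellipticBeta_add_half_right (x := 1 / 8) (by norm_num) (by norm_num)
  norm_num [-sin_pi_div_eight, two_rpow_three_halves] at h
  rwa [mul_one_div] at h

lemma ellipticBeta_five_eighths_one_eighth :
    ellipticBeta (5 / 8) (1 / 8) = 2 * √2 * cos (π / 8) * ellipticBeta (3 / 8) (1 / 4) := by
  have h := ellipticBeta_add_half_left (x := 1 / 8) (by norm_num) (by norm_num)
  norm_num [-cos_pi_div_eight, two_rpow_three_halves] at h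
  rwa [mul_one_div] at h

lemma ellipticBeta_three_eighths_seven_eighths :
    ellipticBeta (3 / 8) (7 / 8) = √2 * cos (π / 8) * ellipticBeta (5 / 8) (3 / 4) := by
  have h := ellipticBeta_add_half_right (x := 3 / 8) (by norm_num) (by norm_num)
  rw [show π * (3 / 8) = π / 2 - π / 8 by ring, sin_pi_div_two_sub] at h
  norm_num [-cos_pi_div_eight, ← sqrt_eq_rpow] at h
  exact h

lemma ellipticBeta_seven_eighths_three_eighths :
    ellipticBeta (7 / 8) (3 / 8) = √2 * sin (π / 8) * ellipticBeta (1 / 8) (3 / 4) := by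
  have h := ellipticBeta_add_half_left (x := 3 / 8) (by norm_num) (by norm_num)
  rw [show π * (3 / 8) = π / 2 - π / 8 by ring, cos_pi_div_two_sub] at h
  norm_num [-sin_pi_div_eight, ← sqrt_eq_rpow] at h
  exact h

lemma ellipticBeta_seven_eighths_one_fourth :
    ellipticBeta (7 / 8) (1 / 4) =
      ellipticBeta (5 / 8) (3 / 4) + √2 / 2 * ellipticBeta (1 / 8) (3 / 4) := by
  have h := ellipticBeta_one_sub (x := 1 / 8) (by norm_num) (by norm_num)
  rw [show 2 * π * (1 / 8) = π / 4 by ring, sin_pi_div_four, cos_pi_div_four] at h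
  norm_num [← sqrt_eq_rpow, mul_div_assoc'] at h
  exact h

lemma ellipticBeta_three_eighths_one_fourth :
    ellipticBeta (3 / 8) (1 / 4) =
      ellipticBeta (1 / 8) (3 / 4) + √2 / 2 * ellipticBeta (5 / 8) (3 / 4) := by
  have h := ellipticBeta_half_sub (x := 1 / 8) (by norm_num) (by norm_num)
  rw [show 2 * π * (1 / 8) = π / 4 by ring, sin_pi_div_four, cos_pi_div_four] at h
  norm_num [← sqrt_eq_rpow, mul_div_assoc'] at h
  exact h

open Complex in
lemma lvalue_linear_relation_class7 :
    (Fval (1 / 8) (3 / 4) : ℂ) + 2 * I * √2 * Fval (3 / 8) (5 / 4) + 4 * Fval (5 / 8) (3 / 4) -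
        8 * I * √2 * Fval (7 / 8) (5 / 4) =
      2 * Real.sin (π / 8) * (√2 - I) *
        (Fval (1 / 8) (7 / 8) + 2 * √2 * Fval (3 / 8) (5 / 8) + 4 * I * Fval (5 / 8) (11 / 8) +
          8 * I * √2 * Fval (7 / 8) (9 / 8)) := by
  have hFval_one (s : ℚ) := Fval_odd_div_eight 0 s
  have hFval_three (s : ℚ) := Fval_odd_div_eight 1 s
  have hFval_five (s : ℚ) := Fval_odd_div_eight 2 s
  have hFval_seven (s : ℚ) := Fval_odd_div_eight 3 s
  norm_num at hFval_one hFval_three hFval_five hFval_seven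
  rw [hFval_one, hFval_one, hFval_three, hFval_three, hFval_five, hFval_five, hFval_seven,
    hFval_seven]
  norm_num [-Complex.ofReal_sin, -sin_pi_div_eight]
  rw [ellipticBeta_one_eighth_five_eighths, ellipticBeta_three_eighths_seven_eighths,
    ellipticBeta_five_eighths_one_eighth, ellipticBeta_seven_eighths_three_eighths,
    ellipticBeta_three_eighths_one_fourth, ellipticBeta_seven_eighths_one_fourth,
    cos_pi_div_eight_eq_mul_sin]
  have hsqrt_two : (√2 : ℂ) ^ 2 = 2 := by exact_mod_cast sq_sqrt (zero_le_two (α := ℝ))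
  have hI : I ^ 2 = -1 := I_sq
  push_cast [-Complex.ofReal_sin]
  generalize (√2 : ℂ) = w, ((Real.sin (π / 8) : ℝ) : ℂ) = σ, (ellipticBeta (1 / 8) (3 / 4) : ℂ) = A,
    (ellipticBeta (5 / 8) (3 / 4) : ℂ) = B, I = i at *
  grind

end EulerIntegrals

open Complex in
/-- L(f_{1/8,3/4},1)² = (2 − √2 − 4i·(√2 − 1))·L(f_{1/8,7/8},1)², with the L-values
expressed as linear combinations of normalized hypergeometric values
(note √(3 − 2√2) = √2 − 1). -/
theorem lvalue_relation_class7 :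
    ((Fval (1/8) (3/4) : ℂ) + 2 * I * (Real.sqrt 2 : ℂ) * (Fval (3/8) (5/4) : ℂ) +
        4 * (Fval (5/8) (3/4) : ℂ) -
        8 * I * (Real.sqrt 2 : ℂ) * (Fval (7/8) (5/4) : ℂ)) ^ 2 =
      (2 - (Real.sqrt 2 : ℂ) - 4 * I * ((Real.sqrt 2 : ℂ) - 1)) *
        ((Fval (1/8) (7/8) : ℂ) + 2 * (Real.sqrt 2 : ℂ) * (Fval (3/8) (5/8) : ℂ) +
          4 * I * (Fval (5/8) (11/8) : ℂ) +
          8 * I * (Real.sqrt 2 : ℂ) * (Fval (7/8) (9/8) : ℂ)) ^ 2 := by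
  have hsqrt_two : (√2 : ℂ) ^ 2 = 2 := by exact_mod_cast Real.sq_sqrt zero_le_two
  have hsin : 4 * (Real.sin (Real.pi / 8) : ℂ) ^ 2 = 2 - √2 := by
    exact_mod_cast four_mul_sin_pi_div_eight_sq
  have hsq : (√2 - I : ℂ) ^ 2 = 1 - 2 * √2 * I := by
    linear_combination hsqrt_two + I_sq
  have hfactor : (2 * Real.sin (Real.pi / 8) * (√2 - I) : ℂ) ^ 2 = 2 - √2 - 4 * I * (√2 - 1) := by
    rw [mul_pow, mul_pow, hsq]
    linear_combination (1 - 2 * √2 * I) * hsin + 2 * I * hsqrt_two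
  rw [lvalue_linear_relation_class7, mul_pow, hfactor]
end

section
/- Let r, s be rational numbers such that A = 16s−8r−12, B = 8r+8s−12 and C = 24s−30 are all integers (the exponents for the pair (s−r, s) are then also integers). Then for every τ in the upper half-plane, 𝕂₂(r,s)(−1/τ) = (−iτ)³ · 2^{4s−8r} · 𝕂₂(s−r, s)(τ), where 2^{4s−8r} denotes the positive real power of 2. (This is the Atkin–Lehner-type involution relating 𝕂₂(r,s) to 𝕂₂(s−r,s), proved from η(−1/τ) = √(−iτ)·η(τ).) -/
/-- The Dedekind eta function η(τ) = e^{πiτ/12}·∏_{n=1}^∞ (1 − e^{2πinτ}). -/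
noncomputable def eta (τ : ℂ) : ℂ :=
  Complex.exp ((Real.pi : ℂ) * Complex.I * τ / 12) *
    ∏' n : ℕ, (1 - Complex.exp (2 * (Real.pi : ℂ) * Complex.I * ((n : ℂ) + 1) * τ))

/-- The eta quotient 𝕂₂ with integer exponents A, B, C:
𝕂₂(τ) = η(τ/2)^A · η(2τ)^B · η(τ)^{−C}. -/
noncomputable def K2exp (A B C : ℤ) (τ : ℂ) : ℂ :=
  eta (τ / 2) ^ A * eta (2 * τ) ^ B * eta τ ^ (-C)

/-!
At `-1/τ` the three eta factors of `𝕂₂` have arguments `-1/(2τ)`, `-1/(τ/2)` and `-1/τ`, so by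
`η(-1/τ) = √(-iτ) η(τ)` the involution exchanges the first two, and with them the exponents `A`
and `B`. Each eta factor contributes `√(-iτ)`, which gives the weight `(A + B - C)/2 = 3`; the
rescalings contribute `√2 ^ A` and `√2 ^ (-B)`, which gives `2 ^ ((A - B)/2) = 2 ^ (4s - 8r)`.
-/

open Complex hiding eta

theorem mul_cpow_of_arg_add_mem_Ioc {z w : ℂ} (h : arg z + arg w ∈ Set.Ioc (-Real.pi) Real.pi)
    (a : ℂ) : (z * w) ^ a = z ^ a * w ^ a := by
  rcases eq_or_ne a 0 with rfl | ha
  · simp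
  rcases eq_or_ne z 0 with rfl | hz
  · simp [ha]
  rcases eq_or_ne w 0 with rfl | hw
  · simp [ha]
  rw [cpow_def_of_ne_zero (mul_ne_zero hz hw), cpow_def_of_ne_zero hz, cpow_def_of_ne_zero hw,
    log_mul hz hw h, add_mul, exp_add]

theorem csqrt_sq (z : ℂ) : Complex.sqrt z ^ 2 = z :=
  cpow_ofNat_inv_pow z 2

theorem csqrt_eq_zero_iff {z : ℂ} : Complex.sqrt z = 0 ↔ z = 0 := by
  rw [← pow_eq_zero_iff two_ne_zero, csqrt_sq]

theorem csqrt_ofReal_mul {c : ℝ} (hc : 0 ≤ c) (z : ℂ) :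
    Complex.sqrt (c * z) = √c * Complex.sqrt z := by
  have harg : arg c + arg z ∈ Set.Ioc (-Real.pi) Real.pi := by
    simpa only [arg_ofReal_of_nonneg hc, zero_add] using arg_mem_Ioc z
  have hsqrt : Complex.sqrt c = √c := Complex.sqrt_of_nonneg (by exact_mod_cast hc)
  rw [← hsqrt]
  exact mul_cpow_of_arg_add_mem_Ioc harg _

theorem csqrt_neg_I_mul {τ : ℂ} (hτ : 0 ≤ τ.im) :
    Complex.sqrt (-I * τ) = (Complex.sqrt I)⁻¹ * Complex.sqrt τ := by
  have harg : arg (-I) + arg τ ∈ Set.Ioc (-Real.pi) Real.pi := by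
    rw [arg_neg_I]
    constructor <;> linarith [arg_nonneg_iff.mpr hτ, arg_le_pi τ, Real.pi_pos]
  have hsqrt : Complex.sqrt (-I) = (Complex.sqrt I)⁻¹ := by
    rw [← inv_I]
    exact inv_cpow _ _ (by rw [arg_I]; linarith [Real.pi_pos])
  rw [← hsqrt]
  exact mul_cpow_of_arg_add_mem_Ioc harg _

theorem eta_eq_modularForm_eta : eta = ModularForm.eta := by
  ext τ
  simp only [eta, ModularForm.eta, ModularForm.eta_q_eq_cexp, Function.Periodic.qParam]
  congr 2
  push_cast
  ring

theorem eta_neg_one_div {τ : ℂ} (hτ : 0 < τ.im) :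
    eta (-1 / τ) = Complex.sqrt (-I * τ) * eta τ := by
  rw [eta_eq_modularForm_eta, csqrt_neg_I_mul hτ.le, mul_assoc]
  exact ModularForm.eta_comp_eq_csqrt_I_inv hτ

theorem eta_neg_one_div_ofReal_mul {c : ℝ} (hc : 0 < c) {τ : ℂ} (hτ : 0 < τ.im) :
    eta (-1 / (c * τ)) = √c * Complex.sqrt (-I * τ) * eta (c * τ) := by
  have hcτ : 0 < (c * τ).im := by
    rw [im_ofReal_mul]
    exact mul_pos hc hτ
  rw [eta_neg_one_div hcτ, mul_left_comm, csqrt_ofReal_mul hc.le]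

theorem K2exp_neg_one_div (A B C : ℤ) {τ : ℂ} (hτ : 0 < τ.im) :
    K2exp A B C (-1 / τ) =
      Complex.sqrt (-I * τ) ^ (A + B - C) * (√2 : ℂ) ^ (A - B) * K2exp B A C τ := by
  have hτ_ne : τ ≠ 0 := by
    rintro rfl
    exact hτ.false
  have hsqrt_ne : Complex.sqrt (-I * τ) ≠ 0 :=
    csqrt_eq_zero_iff.not.mpr (mul_ne_zero (neg_ne_zero.mpr I_ne_zero) hτ_ne)
  have hsqrt_two_ne : (√2 : ℂ) ≠ 0 := by simp
  have half : eta (-1 / τ / 2) = √2 * Complex.sqrt (-I * τ) * eta (2 * τ) := by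
    simpa only [ofReal_ofNat, div_div, mul_comm τ 2] using
      eta_neg_one_div_ofReal_mul two_pos hτ
  have double : eta (2 * (-1 / τ)) = (√2 : ℂ)⁻¹ * Complex.sqrt (-I * τ) * eta (τ / 2) := by
    have h := eta_neg_one_div_ofReal_mul (inv_pos.mpr two_pos) hτ
    rw [Real.sqrt_inv, ofReal_inv, ofReal_inv, ofReal_ofNat, inv_mul_eq_div] at h
    rwa [show 2 * (-1 / τ) = -1 / (τ / 2) by field_simp]
  rw [K2exp, K2exp, half, double, eta_neg_one_div hτ, sub_eq_add_neg (A + B), zpow_add₀ hsqrt_ne,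
    zpow_add₀ hsqrt_ne, zpow_sub₀ hsqrt_two_ne]
  simp only [mul_zpow, inv_zpow]
  ring

/-- The Atkin–Lehner-type involution: if the exponents A = 16s−8r−12, B = 8r+8s−12,
C = 24s−30 of 𝕂₂(r,s) are integers (and A′, B′, C′ are the corresponding exponents
for the pair (s−r, s)), then for all τ in the upper half-plane
𝕂₂(r,s)(−1/τ) = (−iτ)³·2^{4s−8r}·𝕂₂(s−r,s)(τ), with 2^{4s−8r} the positive real
power of 2. -/
theorem K2_atkin_lehner (r s : ℚ) (A B C A' B' C' : ℤ)
    (hA : (A : ℚ) = 16*s - 8*r - 12) (hB : (B : ℚ) = 8*r + 8*s - 12)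
    (hC : (C : ℚ) = 24*s - 30)
    (hA' : (A' : ℚ) = 16*s - 8*(s - r) - 12)
    (hB' : (B' : ℚ) = 8*(s - r) + 8*s - 12)
    (hC' : (C' : ℚ) = 24*s - 30) :
    ∀ τ : ℂ, 0 < τ.im →
      K2exp A B C (-1 / τ) =
        (-Complex.I * τ) ^ 3 * (((2:ℝ) ^ (4*(s:ℝ) - 8*(r:ℝ)) : ℝ) : ℂ) *
          K2exp A' B' C' τ := by
  intro τ hτ
  obtain rfl : B = A' := by exact_mod_cast (by linarith : (B : ℚ) = A')
  obtain rfl : A = B' := by exact_mod_cast (by linarith : (A : ℚ) = B')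
  obtain rfl : C = C' := by exact_mod_cast (by linarith : (C : ℚ) = C')
  have hweight : A + B - C = (2 * 3 : ℕ) := by
    exact_mod_cast (by push_cast; linarith : (A + B - C : ℚ) = (2 * 3 : ℕ))
  have hexponent : 4 * (s : ℝ) - 8 * r = ((A - B : ℤ) : ℝ) / 2 := by
    exact_mod_cast (by push_cast; linarith : 4 * s - 8 * r = ((A - B : ℤ) : ℚ) / 2)
  rw [K2exp_neg_one_div A B C hτ, hweight, zpow_natCast, pow_mul, csqrt_sq, hexponent,
    Real.rpow_div_two_eq_sqrt _ zero_le_two, Real.rpow_intCast, ofReal_zpow]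
end
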